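/- For every positive rational number α, the Lie algebra 𝔤_α admits an integrable complex structure; that is, there exists an ℝ-linear map J : 𝔤_α → 𝔤_α with J ∘ J = −id whose Nijenhuis tensor vanishes: [Jx, Jy] − [x,y] − J[Jx, y] − J[x, Jy] = 0 for all x, y ∈ 𝔤_α. This gives an invariant generalized complex structure of type 4 (an invariant complex structure) on the associated nilmanifold N_α. -/

import Mathlib

/-!
Write `e¹, …, e⁸` for the dual basis, so that `e¹, …, e⁴` are closed and
`de⁵ = e¹²`, `de⁶ = e¹⁵ + (1-α)e²⁴`, `de⁷ = -(1+α)e¹⁴ - e²³ + (1+α)e²⁵`,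
`de⁸ = e¹⁶ + e²⁷ + e³⁴ - 2e⁴⁵`.  With `λ = √(3+α)`, the complex structure is the one whose
`(1,0)`-forms are spanned by

* `ω¹ = e¹ + iλe²`,
* `ω² = e⁴ + (i / (2αλ)) (e³ + 2e⁵)`,
* `ω³ = e⁶ + (i / λ) e⁷`,
* `ω⁴ = e³ + ie⁸`.

It is integrable because no `dωᵏ` has a `(0,2)`-part.  For `k ≠ 3` this holds for any values of the
two scaling parameters.  In `dω³` the terms containing `e³` (after `e⁵` is expressed through
`e³ + 2e⁵`) are a multiple of `ω¹ ∧ e³` exactly when `λ² = 3 + α`, and the remaining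
`(0,2)`-part, a multiple of the conjugate of `ω¹ ∧ ω²`, vanishes exactly for the coefficient
`1 / (2αλ)` in `ω²`.

Below, `gBr_eq` gives the bracket in coordinates, and the Nijenhuis tensor of `cxStr` is then
checked coordinate by coordinate, with `α = λ² - 3` eliminated.
-/

noncomputable section

/-- Structure constants of the Lie algebra `g_alpha` (0-indexed basis `e 0, ..., e 7`
corresponding to `e_1, ..., e_8` in the paper): `gA alpha i j` is the value of the bracket
`[e_i, e_j]` for the listed pairs with `i < j`, and `0` otherwise. -/
def gA (a : ℝ) (i j : Fin 8) : Fin 8 → ℝ :=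
  if i = 0 ∧ j = 1 then -(Pi.single 4 1 : Fin 8 → ℝ)
  else if i = 0 ∧ j = 4 then -(Pi.single 5 1 : Fin 8 → ℝ)
  else if i = 1 ∧ j = 3 then (a - 1) • (Pi.single 5 1 : Fin 8 → ℝ)
  else if i = 0 ∧ j = 3 then (1 + a) • (Pi.single 6 1 : Fin 8 → ℝ)
  else if i = 1 ∧ j = 2 then (Pi.single 6 1 : Fin 8 → ℝ)
  else if i = 1 ∧ j = 4 then -((1 + a) • (Pi.single 6 1 : Fin 8 → ℝ))
  else if i = 0 ∧ j = 5 then -(Pi.single 7 1 : Fin 8 → ℝ)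
  else if i = 1 ∧ j = 6 then -(Pi.single 7 1 : Fin 8 → ℝ)
  else if i = 2 ∧ j = 3 then -(Pi.single 7 1 : Fin 8 → ℝ)
  else if i = 3 ∧ j = 4 then (2 : ℝ) • (Pi.single 7 1 : Fin 8 → ℝ)
  else 0

/-- The skew-symmetric bilinear bracket of `g_alpha`, extended bilinearly from the
structure constants. -/
def gBr (a : ℝ) (x y : Fin 8 → ℝ) : Fin 8 → ℝ :=
  ∑ i : Fin 8, ∑ j : Fin 8, (x i * y j) • (gA a i j - gA a j i)

/-- The distinguished basis vectors `e i = e_{i+1}`. -/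
def e (i : Fin 8) : Fin 8 → ℝ := Pi.single i 1

/-- The bracket of `𝔤_α` in coordinates. -/
lemma gBr_eq (a : ℝ) (x y : Fin 8 → ℝ) :
    gBr a x y = ![0, 0, 0, 0,
      -(x 0 * y 1 - x 1 * y 0),
      -(x 0 * y 4 - x 4 * y 0) + (a - 1) * (x 1 * y 3 - x 3 * y 1),
      (1 + a) * (x 0 * y 3 - x 3 * y 0) + (x 1 * y 2 - x 2 * y 1)
        - (1 + a) * (x 1 * y 4 - x 4 * y 1),
      -(x 0 * y 5 - x 5 * y 0) - (x 1 * y 6 - x 6 * y 1) - (x 2 * y 3 - x 3 * y 2)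
        + 2 * (x 3 * y 4 - x 4 * y 3)] := by
  ext k
  fin_cases k <;>
    simp [gBr, gA, Fin.sum_univ_eight] <;> ring

/-- The complex structure with `(1,0)`-forms `e¹ + ile²`, `e⁴ + (i / (2al)) (e³ + 2e⁵)`,
`e⁶ + (i / l) e⁷` and `e³ + ie⁸`, where a form `ω` is of type `(1,0)` if `ω ∘ J = iω`. -/
def cxStr (a l : ℝ) : (Fin 8 → ℝ) →ₗ[ℝ] (Fin 8 → ℝ) where
  toFun x := ![-(l * x 1), x 0 / l, -x 7, -(x 2 + 2 * x 4) / (2 * a * l),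
    a * l * x 3 + x 7 / 2, -(x 6 / l), l * x 5, x 2]
  map_add' x y := by
    ext k
    fin_cases k <;> simp <;> ring
  map_smul' c x := by
    ext k
    fin_cases k <;> simp <;> ring

lemma cxStr_apply (a l : ℝ) (x : Fin 8 → ℝ) :
    cxStr a l x = ![-(l * x 1), x 0 / l, -x 7, -(x 2 + 2 * x 4) / (2 * a * l),
      a * l * x 3 + x 7 / 2, -(x 6 / l), l * x 5, x 2] := rfl

lemma cxStr_cxStr {a l : ℝ} (ha : a ≠ 0) (hl : l ≠ 0) (x : Fin 8 → ℝ) :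
    cxStr a l (cxStr a l x) = -x := by
  ext k
  fin_cases k <;> simp [cxStr_apply] <;> field_simp <;> ring

lemma cxStr_nijenhuis {a l : ℝ} (ha : a ≠ 0) (hl : l ≠ 0) (h : l ^ 2 = 3 + a)
    (x y : Fin 8 → ℝ) :
    gBr a (cxStr a l x) (cxStr a l y) - gBr a x y - cxStr a l (gBr a (cxStr a l x) y)
      - cxStr a l (gBr a x (cxStr a l y)) = 0 := by
  obtain rfl : a = l ^ 2 - 3 := by linarith
  ext k
  fin_cases k <;> simp [gBr_eq, cxStr_apply] <;> (try field_simp) <;> ring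

/-- `g_alpha` admits an integrable complex structure: an ℝ-linear `J` with
`J ∘ J = -id` and vanishing Nijenhuis tensor. -/
theorem statement9 (α : ℚ) (hα : 0 < α) :
    ∃ J : (Fin 8 → ℝ) →ₗ[ℝ] (Fin 8 → ℝ),
      (∀ x : Fin 8 → ℝ, J (J x) = -x) ∧
      (∀ x y : Fin 8 → ℝ,
        gBr (α : ℝ) (J x) (J y) - gBr (α : ℝ) x y - J (gBr (α : ℝ) (J x) y)
          - J (gBr (α : ℝ) x (J y)) = 0) := by
  have ha : (0 : ℝ) < α := by exact_mod_cast hα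
  have hs : (0 : ℝ) < 3 + α := by linarith
  have hl : √(3 + (α : ℝ)) ≠ 0 := (Real.sqrt_pos.2 hs).ne'
  exact ⟨cxStr α √(3 + (α : ℝ)), cxStr_cxStr ha.ne' hl,
    cxStr_nijenhuis ha.ne' hl (Real.sq_sqrt hs.le)⟩
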